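/- Let U be a set with |U| = n ≥ 2, let s ≥ 2 be an integer, and let F be a family of subsets of U, each of size at most s. Suppose that for any two distinct partitions P₁, P₂ of U each with at most 3 blocks, there exists S ∈ F such that the restriction of P₁ to S differs from the restriction of P₂ to S, where the restriction of a partition P to S is the collection of nonempty sets X ∩ S for X ∈ P. Then |F| ≥ (n(n−1))/(s(s−1)). -/

import Mathlib

/-!
For `x ≠ y`, the partition `{x}, {y}, {x, y}ᶜ` and the partition `{x, y}, {x, y}ᶜ` have the same
restriction to every set that misses `x` or `y`. A distinguishing family therefore contains, for
each of the `n (n - 1)` ordered pairs of distinct points, a set containing both points, and a set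
of size at most `s` contains at most `s (s - 1)` such pairs.
-/

section

variable {U : Type*} [Fintype U] [DecidableEq U]

/-- `P` is a partition of the finite type `U`: a finite collection of nonempty,
pairwise disjoint finsets covering `U`. -/
def IsPartitionOf (P : Finset (Finset U)) : Prop :=
  (∀ b ∈ P, b.Nonempty) ∧ (∀ b ∈ P, ∀ b' ∈ P, b ≠ b' → Disjoint b b') ∧
    ∀ x : U, ∃ b ∈ P, x ∈ b

/-- The restriction of the partition `P` to a subset `T`: the collection of nonempty
sets `X ∩ T` for `X ∈ P`. -/
def restrictPartition (P : Finset (Finset U)) (T : Finset U) : Finset (Finset U) :=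
  (P.image (fun X => X ∩ T)).filter (fun b => b.Nonempty)

theorem isPartitionOf_parts (P : Finpartition (Finset.univ : Finset U)) :
    IsPartitionOf P.parts :=
  ⟨fun _ hb => P.nonempty_of_mem_parts hb, fun _ hb _ hb' hne => P.disjoint hb hb' hne,
    fun x => P.exists_mem (Finset.mem_univ x)⟩

theorem restrictPartition_parts_ofSetoid (r : Setoid U) [DecidableRel r.r] (T : Finset U) :
    restrictPartition (Finpartition.ofSetoid r).parts T =
      (Finpartition.ofSetSetoid r T).parts := by
  have class_inter (x : U) : Finset.univ.filter (r.r x) ∩ T = T.filter (r.r x) := by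
    rw [Finset.filter_inter, Finset.univ_inter]
  ext b
  simp only [restrictPartition, Finpartition.ofSetoid, Finpartition.ofSetSetoid_parts,
    Finset.image_image, Finset.mem_filter, Finset.mem_image, Function.comp_apply, class_inter,
    Finset.mem_univ, true_and]
  constructor
  · rintro ⟨⟨x, rfl⟩, y, hy⟩
    obtain ⟨hyT, hxy⟩ := Finset.mem_filter.1 hy
    exact ⟨y, hyT, Finset.filter_congr fun z _ =>
      ⟨fun hyz => r.trans hxy hyz, fun hxz => r.trans (r.symm hxy) hxz⟩⟩
  · rintro ⟨x, hx, rfl⟩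
    exact ⟨⟨x, rfl⟩, x, Finset.mem_filter.2 ⟨hx, r.refl x⟩⟩

theorem ofSetSetoid_congr {α : Type*} [DecidableEq α] {r r' : Setoid α} [DecidableRel r.r]
    [DecidableRel r'.r] {T : Finset α} (h : ∀ a ∈ T, ∀ b ∈ T, r a b ↔ r' a b) :
    Finpartition.ofSetSetoid r T = Finpartition.ofSetSetoid r' T := by
  ext1
  rw [Finpartition.ofSetSetoid_parts, Finpartition.ofSetSetoid_parts]
  exact Finset.image_congr fun a ha => Finset.filter_congr fun b hb => h a ha b hb

theorem eq_of_ofSetoid_eq {r r' : Setoid U} [DecidableRel r.r] [DecidableRel r'.r]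
    (h : Finpartition.ofSetoid r = Finpartition.ofSetoid r') : r = r' := by
  ext x y
  rw [← Finpartition.mem_part_ofSetoid_iff_rel, h, Finpartition.mem_part_ofSetoid_iff_rel]

theorem card_parts_ofSetoid_ker_le {κ : Type*} [Fintype κ] (f : U → κ)
    [DecidableRel (Setoid.ker f).r] :
    (Finpartition.ofSetoid (Setoid.ker f)).parts.card ≤ Fintype.card κ := by
  classical
  have parts_subset : (Finpartition.ofSetoid (Setoid.ker f)).parts ⊆
      Finset.univ.image fun c => Finset.univ.filter (f · = c) := by
    simp only [Finpartition.ofSetoid, Finpartition.ofSetSetoid_parts, Finset.image_subset_iff]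
    intro x _
    refine Finset.mem_image.2 ⟨f x, Finset.mem_univ _, Finset.ext fun y => ?_⟩
    simp only [Finset.mem_filter_univ]
    exact eq_comm
  exact (Finset.card_le_card parts_subset).trans Finset.card_image_le

/-- The family `F` of queries distinguishes partitions into at most `k` blocks: distinct partitions
of this kind have distinct restrictions to some member of `F`. -/
def DistinguishesPartitions (F : Finset (Finset U)) (k : ℕ) : Prop :=
  ∀ P₁ P₂ : Finset (Finset U), IsPartitionOf P₁ → IsPartitionOf P₂ →
    P₁.card ≤ k → P₂.card ≤ k → P₁ ≠ P₂ →
    ∃ T ∈ F, restrictPartition P₁ T ≠ restrictPartition P₂ T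

omit [Fintype U] in
theorem DistinguishesPartitions.exists_mem_not_eq_iff_eq [Finite U] {F : Finset (Finset U)}
    {κ : Type*} [Fintype κ] (hF : DistinguishesPartitions F (Fintype.card κ)) {f g : U → κ}
    (hfg : Setoid.ker f ≠ Setoid.ker g) :
    ∃ T ∈ F, ∃ a ∈ T, ∃ b ∈ T, ¬(f a = f b ↔ g a = g b) := by
  classical
  cases nonempty_fintype U
  obtain ⟨T, hT, hne⟩ := hF (Finpartition.ofSetoid (Setoid.ker f)).parts
    (Finpartition.ofSetoid (Setoid.ker g)).parts (isPartitionOf_parts _) (isPartitionOf_parts _)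
    (card_parts_ofSetoid_ker_le f) (card_parts_ofSetoid_ker_le g)
    fun h => hfg (eq_of_ofSetoid_eq (Finpartition.ext h))
  refine ⟨T, hT, ?_⟩
  contrapose! hne
  rw [restrictPartition_parts_ofSetoid, restrictPartition_parts_ofSetoid,
    ofSetSetoid_congr (r := Setoid.ker f) (r' := Setoid.ker g) hne]

omit [Fintype U] in
theorem DistinguishesPartitions.exists_mem_pair [Finite U] {F : Finset (Finset U)}
    (hF : DistinguishesPartitions F 3) {x y : U} (hxy : x ≠ y) : ∃ T ∈ F, x ∈ T ∧ y ∈ T := by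
  let split : U → Fin 3 := fun z => if z = x then 0 else if z = y then 1 else 2
  let merged : U → Fin 3 := fun z => if z = x ∨ z = y then 0 else 2
  have ker_ne : Setoid.ker split ≠ Setoid.ker merged := fun h => by
    have key : split x = split y ↔ merged x = merged y := Setoid.ext_iff.1 h x y
    simp [split, merged, hxy.symm] at key
  obtain ⟨T, hT, a, ha, b, hb, hab⟩ := hF.exists_mem_not_eq_iff_eq ker_ne
  have pair_eq : a = x ∧ b = y ∨ a = y ∧ b = x := by grind
  rcases pair_eq with ⟨rfl, rfl⟩ | ⟨rfl, rfl⟩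
  · exact ⟨T, hT, ha, hb⟩
  · exact ⟨T, hT, hb, ha⟩

theorem card_mul_card_sub_one_le_of_pairwise_exists_mem {α : Type*} {A : Finset α}
    {F : Finset (Finset α)} {s : ℕ} (hFs : ∀ T ∈ F, T.card ≤ s)
    (hcover : (A : Set α).Pairwise fun x y => ∃ T ∈ F, x ∈ T ∧ y ∈ T) :
    A.card * (A.card - 1) ≤ F.card * (s * (s - 1)) := by
  classical
  have card_offDiag (T : Finset α) : T.offDiag.card = T.card * (T.card - 1) := by
    rw [Finset.offDiag_card, Nat.mul_sub_one]
  have offDiag_subset : A.offDiag ⊆ F.biUnion Finset.offDiag := by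
    rintro ⟨x, y⟩ hp
    obtain ⟨hx, hy, hxy⟩ := Finset.mem_offDiag.1 hp
    obtain ⟨T, hT, hxT, hyT⟩ := hcover hx hy hxy
    exact Finset.mem_biUnion.2 ⟨T, hT, Finset.mem_offDiag.2 ⟨hxT, hyT, hxy⟩⟩
  calc A.card * (A.card - 1) = A.offDiag.card := (card_offDiag A).symm
    _ ≤ (F.biUnion Finset.offDiag).card := Finset.card_le_card offDiag_subset
    _ ≤ F.card * (s * (s - 1)) := Finset.card_biUnion_le_card_mul _ _ _ fun T hT => by
      rw [card_offDiag]
      exact Nat.mul_le_mul (hFs T hT) (Nat.sub_le_sub_right (hFs T hT) 1)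

/-- **Non-adaptive strong subset query lower bound**: if a family `F` of subsets of `U`,
each of size at most `s`, distinguishes (by restriction) every two distinct partitions
of `U` into at most `3` blocks, then `|F| ≥ n(n-1)/(s(s-1))`. -/
theorem nonadaptive_strong_query_lower_bound (n s : ℕ)
    (hn : n = Fintype.card U) (hn2 : 2 ≤ n) (hs : 2 ≤ s)
    (F : Finset (Finset U)) (hFs : ∀ T ∈ F, T.card ≤ s)
    (hdist : ∀ P₁ P₂ : Finset (Finset U), IsPartitionOf P₁ → IsPartitionOf P₂ →
      P₁.card ≤ 3 → P₂.card ≤ 3 → P₁ ≠ P₂ →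
      ∃ T ∈ F, restrictPartition P₁ T ≠ restrictPartition P₂ T) :
    ((n : ℝ) * (n - 1)) / ((s : ℝ) * (s - 1)) ≤ F.card := by
  have hF : DistinguishesPartitions F 3 := hdist
  have hcard : n * (n - 1) ≤ F.card * (s * (s - 1)) := by
    rw [hn, ← Finset.card_univ]
    exact card_mul_card_sub_one_le_of_pairwise_exists_mem hFs
      fun _ _ _ _ hxy => hF.exists_mem_pair hxy
  have hs_pos : (0 : ℝ) < s * (s - 1) := by
    rw [← Nat.cast_pred (by omega)]
    exact_mod_cast Nat.mul_pos (by omega) (by omega)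
  rw [div_le_iff₀ hs_pos, ← Nat.cast_pred (by omega), ← Nat.cast_pred (by omega)]
  exact_mod_cast hcard

end
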